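/- Let (X, 𝒜, μ) be a σ-finite measure space, let p_E, p_θ, p_α : X → [0,∞) be densities (measurable with ∫ p dμ = 1), let ω ∈ (0,1), and set p_ω := ω·p_θ + (1−ω)·p_α. With the convention 0·log 0 = 0, the optimal value V(D*) := ∫ p_E·log(p_E/(p_E+p_ω)) dμ + ∫ p_ω·log(p_ω/(p_E+p_ω)) dμ satisfies V(D*) ≥ −log 4, and V(D*) = −log 4 if and only if p_E = p_ω μ-almost everywhere. -/

import Mathlib

/-!
STATEMENT 6 (Lemma 2 of Triple-GAIL): with densities `p_E, p_θ, p_α`,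
`ω ∈ (0,1)` and `p_ω = ω·p_θ + (1−ω)·p_α`, the optimal value
`V(D*) = ∫ p_E·log(p_E/(p_E+p_ω)) dμ + ∫ p_ω·log(p_ω/(p_E+p_ω)) dμ`
satisfies `V(D*) ≥ −log 4`, with equality iff `p_E = p_ω` μ-a.e.
(The convention `0·log 0 = 0` holds definitionally, since `Real.log 0 = 0`
and `x / 0 = 0` in Lean.)
-/

open MeasureTheory

lemma aux_lt (a b : ℝ) (ha : 0 ≤ a) (hb : 0 ≤ b) (hab : a ≠ b) :
    (a - b) / 2 < a * Real.log (a / (a + b)) + a * Real.log 2 := by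
  rcases ha.eq_or_lt with rfl | ha'
  · have : 0 < b := lt_of_le_of_ne hb hab
    simp
    linarith
  · have hx : 0 < (a + b) / (2 * a) := by positivity
    have hne : (a + b) / (2 * a) ≠ 1 := by
      intro h
      rw [div_eq_one_iff_eq (by positivity)] at h
      exact hab (by linarith)
    have h1 := Real.log_lt_sub_one_of_pos hx hne
    have h2 : Real.log ((a + b) / (2 * a)) = -(Real.log (a / (a + b)) + Real.log 2) := by
      rw [← Real.log_mul (by positivity) (by norm_num), ← Real.log_inv]
      congr 1
      field_simp
    rw [h2] at h1
    have h3 := mul_lt_mul_of_pos_left h1 ha'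
    have h4 : a * ((a + b) / (2 * a) - 1) = (b - a) / 2 := by
      field_simp
      ring
    rw [h4] at h3
    linarith

lemma aux_eq (a : ℝ) : a * Real.log (a / (a + a)) + a * Real.log 2 = 0 := by
  by_cases h : a = 0
  · simp [h]
  · have : a / (a + a) = (2 : ℝ)⁻¹ := by
      field_simp
      norm_num
    rw [this, Real.log_inv]
    ring

lemma aux_bound (a b : ℝ) (ha : 0 ≤ a) (hb : 0 ≤ b) :
    ‖a * Real.log (a / (a + b))‖ ≤ b := by
  rcases ha.eq_or_lt with rfl | ha'
  · simpa using hb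
  · have h1 : Real.log (a / (a + b)) ≤ 0 :=
      Real.log_nonpos (by positivity) (div_le_one_of_le₀ (by linarith) (by positivity))
    have h2 := Real.one_sub_inv_le_log_of_pos (show 0 < a / (a + b) by positivity)
    have h3 := mul_le_mul_of_nonneg_left h2 ha
    have h4 : a * (1 - (a / (a + b))⁻¹) = - b := by
      field_simp
      ring
    rw [Real.norm_eq_abs, abs_le]
    constructor
    · linarith
    · nlinarith

lemma aux_main {X : Type*} [MeasurableSpace X] (μ : Measure X) (p q : X → ℝ)
    (hpm : Measurable p) (hqm : Measurable q) (hp0 : ∀ x, 0 ≤ p x) (hq0 : ∀ x, 0 ≤ q x)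
    (hpi : Integrable p μ) (hqi : Integrable q μ)
    (hp1 : ∫ x, p x ∂μ = 1) (hq1 : ∫ x, q x ∂μ = 1) :
    -Real.log 4 ≤ (∫ x, p x * Real.log (p x / (p x + q x)) ∂μ)
        + (∫ x, q x * Real.log (q x / (p x + q x)) ∂μ) ∧
    ((∫ x, p x * Real.log (p x / (p x + q x)) ∂μ)
        + (∫ x, q x * Real.log (q x / (p x + q x)) ∂μ) = -Real.log 4 ↔ p =ᵐ[μ] q) := by
  have i1 : Integrable (fun x => p x * Real.log (p x / (p x + q x))) μ :=
    hqi.mono' (by fun_prop) (ae_of_all _ fun x => aux_bound _ _ (hp0 x) (hq0 x))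
  have i2 : Integrable (fun x => q x * Real.log (q x / (p x + q x))) μ :=
    hpi.mono' (by fun_prop) (ae_of_all _ fun x => by
      rw [add_comm (p x)]
      exact aux_bound _ _ (hq0 x) (hp0 x))
  have j1 := i1.add (hpi.mul_const (Real.log 2))
  have j2 := i2.add (hqi.mul_const (Real.log 2))
  set g : X → ℝ := fun x => (p x * Real.log (p x / (p x + q x)) + p x * Real.log 2)
    + (q x * Real.log (q x / (p x + q x)) + q x * Real.log 2) with hg
  have hgi : Integrable g μ := j1.add j2
  have l4 : Real.log 4 = 2 * Real.log 2 := by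
    rw [show (4 : ℝ) = 2 ^ 2 by norm_num, Real.log_pow]
    norm_num
  have hint : ∫ x, g x ∂μ = (∫ x, p x * Real.log (p x / (p x + q x)) ∂μ)
        + (∫ x, q x * Real.log (q x / (p x + q x)) ∂μ) + Real.log 4 := by
    have e1 := integral_add j1 j2
    have e2 := integral_add i1 (hpi.mul_const (Real.log 2))
    have e3 := integral_add i2 (hqi.mul_const (Real.log 2))
    rw [integral_mul_const, hp1] at e2
    rw [integral_mul_const, hq1] at e3
    simp only [Pi.add_apply] at e1
    simp only [hg]
    rw [e1, e2, e3, l4]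
    ring
  have hpos : ∀ x, p x ≠ q x → 0 < g x := by
    intro x hx
    have h1 := aux_lt _ _ (hp0 x) (hq0 x) hx
    have h2 := aux_lt _ _ (hq0 x) (hp0 x) hx.symm
    rw [add_comm (q x) (p x)] at h2
    simp only [hg]
    linarith
  have hzero : ∀ x, p x = q x → g x = 0 := by
    intro x hx
    simp only [hg, hx, aux_eq, add_zero]
  have hnn : ∀ x, 0 ≤ g x := fun x => by
    by_cases h : p x = q x
    · exact (hzero x h).ge
    · exact (hpos x h).le
  have h0 : 0 ≤ ∫ x, g x ∂μ := integral_nonneg hnn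
  refine ⟨by linarith, ?_⟩
  have hiff := integral_eq_zero_iff_of_nonneg hnn hgi
  constructor
  · intro h
    have : g =ᵐ[μ] 0 := hiff.1 (by linarith)
    filter_upwards [this] with x hx
    by_contra hne
    exact (hpos x hne).ne' hx
  · intro h
    have : g =ᵐ[μ] 0 := by
      filter_upwards [h] with x hx using hzero x hx
    have := hiff.2 this
    linarith

theorem optimal_value_ge_neg_log_four
    {X : Type*} [MeasurableSpace X] (μ : Measure X) [SigmaFinite μ]
    (pE pθ pα : X → ℝ)
    (hpEm : Measurable pE) (hpE0 : ∀ x, 0 ≤ pE x) (hpE1 : ∫ x, pE x ∂μ = 1)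
    (hpθm : Measurable pθ) (hpθ0 : ∀ x, 0 ≤ pθ x) (hpθ1 : ∫ x, pθ x ∂μ = 1)
    (hpαm : Measurable pα) (hpα0 : ∀ x, 0 ≤ pα x) (hpα1 : ∫ x, pα x ∂μ = 1)
    (ω : ℝ) (hω : ω ∈ Set.Ioo (0 : ℝ) 1) :
    -Real.log 4 ≤
      (∫ x, pE x *
          Real.log (pE x / (pE x + (ω * pθ x + (1 - ω) * pα x))) ∂μ)
        + (∫ x, (ω * pθ x + (1 - ω) * pα x) *
            Real.log ((ω * pθ x + (1 - ω) * pα x) /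
              (pE x + (ω * pθ x + (1 - ω) * pα x))) ∂μ) ∧
    ((∫ x, pE x *
          Real.log (pE x / (pE x + (ω * pθ x + (1 - ω) * pα x))) ∂μ)
        + (∫ x, (ω * pθ x + (1 - ω) * pα x) *
            Real.log ((ω * pθ x + (1 - ω) * pα x) /
              (pE x + (ω * pθ x + (1 - ω) * pα x))) ∂μ)
      = -Real.log 4
      ↔ pE =ᵐ[μ] fun x => ω * pθ x + (1 - ω) * pα x) := by
  have iE : Integrable pE μ := integrable_of_integral_eq_one hpE1
  have iθ : Integrable pθ μ := integrable_of_integral_eq_one hpθ1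
  have iα : Integrable pα μ := integrable_of_integral_eq_one hpα1
  obtain ⟨h0, h1⟩ := hω
  refine aux_main μ pE (fun x => ω * pθ x + (1 - ω) * pα x) hpEm (by fun_prop) hpE0 ?_ iE
    ((iθ.const_mul ω).add (iα.const_mul (1 - ω))) hpE1 ?_
  · intro x
    exact add_nonneg (mul_nonneg h0.le (hpθ0 x)) (mul_nonneg (by linarith) (hpα0 x))
  · rw [integral_add (iθ.const_mul ω) (iα.const_mul (1 - ω)), integral_const_mul,
      integral_const_mul, hpθ1, hpα1]
    ring
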